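/- For every edge e of the graph, the adjoint of the operator T_e (the bounded operator with T_e φ = Φ_{f_e⁻¹}^{1/2}·(φ∘f_e⁻¹) on R_e and 0 elsewhere) satisfies: for every ψ ∈ L²(X,μ), T_e* ψ agrees μ-almost everywhere with the function equal to Φ_{f_e}(t)^{1/2}·ψ(f_e(t)) for t ∈ D_{r(e)} and 0 elsewhere. Moreover T_e T_e* = M_{χ_{R_e}} (multiplication by the indicator of R_e); consequently T_e T_e* T_e = T_e (so T_e is a partial isometry) and M_{χ_{D_{s(e)}}} ∘ (T_e T_e*) = T_e T_e*, i.e., T_e T_e* ≤ M_{χ_{D_{s(e)}}}. -/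

import Mathlib

/-!
On `D (r e)` and `R e`, the maps `f e` and `finv e` form a nonsingular isomorphism `f`, `g` of
measure spaces. Pushing `μ` forward along `f` and then back along `g` returns `μ`, so the densities
`ρ = d(f_* μ)/dν` and `σ = d(g_* ν)/dμ` satisfy `σ · (ρ ∘ f) = 1` almost everywhere. Hence
`φ ↦ √ρ • (φ ∘ g)` and `ψ ↦ √σ • (ψ ∘ f)` are inverse to each other, and changing variables in the
inner product gives `∫ √ρ ⟪φ ∘ g, ψ⟫ dν = ∫ σ √(ρ ∘ f) ⟪φ, ψ ∘ f⟫ dμ = ∫ √σ ⟪φ, ψ ∘ f⟫ dμ`, so they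
are also adjoint. Restriction to `D (r e)` followed by the first map and extension by zero from
`R e` is `T_e`.
-/

open MeasureTheory Set
open scoped ENNReal NNReal

section

variable {V0 E1 X : Type*}

/-- A relative `G`-branching system, relative to a set `V` of vertices, on a measure space
`(X, μ)`, for a directed graph with vertices `V0`, edges `E1`, range map `r` and source map
`s`. The data consists of measurable sets `R e` (for edges) and `D v` (for vertices),
together with measurable maps `f e : D (r e) → R e` and `finv e : R e → D (r e)` that are
mutually inverse `μ`-a.e. and whose pushforward measures are absolutely continuous w.r.t.
`μ`. -/
structure RelBranchingSystem [MeasurableSpace X] (r s : E1 → V0) (V : Set V0)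
    (μ : Measure X) (R : E1 → Set X) (D : V0 → Set X) (f finv : E1 → X → X) : Prop where
  measR : ∀ e, MeasurableSet (R e)
  measD : ∀ v, MeasurableSet (D v)
  measf : ∀ e, Measurable (f e)
  measfinv : ∀ e, Measurable (finv e)
  disjR : ∀ e e', e ≠ e' → μ (R e ∩ R e') = 0
  disjD : ∀ u v, u ≠ v → μ (D u ∩ D v) = 0
  RsubD : ∀ e, μ (R e \ D (s e)) = 0
  CK : ∀ v ∈ V, (∃ e, s e = v) → μ (symmDiff (D v) (⋃ e ∈ {e' | s e' = v}, R e)) = 0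
  mapsf : ∀ e, MapsTo (f e) (D (r e)) (R e)
  mapsfinv : ∀ e, MapsTo (finv e) (R e) (D (r e))
  inv_right : ∀ e, ∀ᵐ x ∂μ.restrict (R e), f e (finv e x) = x
  inv_left : ∀ e, ∀ᵐ t ∂μ.restrict (D (r e)), finv e (f e t) = t
  ac_f : ∀ e, (μ.restrict (D (r e))).map (f e) ≪ μ
  ac_finv : ∀ e, (μ.restrict (R e)).map (finv e) ≪ μ

/-- The Radon–Nikodym derivative of the pushforward of `μ` restricted to `S` under `h`,
with respect to `μ`.  Taking `S = D (r e)`, `h = f e` gives `Φ_{f_e⁻¹}`, and taking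
`S = R e`, `h = finv e` gives `Φ_{f_e}`. -/
noncomputable def pushDeriv [MeasurableSpace X] (μ : Measure X) (S : Set X) (h : X → X) :
    X → ℝ≥0∞ :=
  ((μ.restrict S).map h).rnDeriv μ

/-- The function `x ↦ χ_{R e}(x) · Φ_{f_e⁻¹}(x)^{1/2} · φ(f_e⁻¹ x)`, i.e. the prospective
action of the partial isometry `T_e` on a function `φ`. -/
noncomputable def Taction [MeasurableSpace X] (μ : Measure X) (Re DRe : Set X)
    (fe finve : X → X) (φ : X → ℂ) : X → ℂ :=
  Re.indicator fun x => (Real.sqrt ((pushDeriv μ DRe fe x).toReal) : ℂ) * φ (finve x)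

variable {α β E : Type*} [MeasurableSpace α] [MeasurableSpace β]

theorem rnDeriv_restrict_right (κ μ : Measure α) [SigmaFinite κ] [SigmaFinite μ] {s : Set α}
    (hs : MeasurableSet s) : κ.rnDeriv (μ.restrict s) =ᵐ[μ.restrict s] κ.rnDeriv μ := by
  filter_upwards [Measure.rnDeriv_mul_rnDeriv' (μ := κ) (κ := μ)
      Measure.restrict_le_self.absolutelyContinuous,
    ae_restrict_of_ae (Measure.rnDeriv_restrict_self μ hs), ae_restrict_mem hs]
    with x hchain hself hx
  simpa [hself, hx] using hchain

theorem map_withDensity_comp {ν : Measure β} {g : β → α} {w : α → ℝ≥0∞} (hg : Measurable g)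
    (hw : Measurable w) :
    (ν.withDensity (w ∘ g)).map g = (ν.map g).withDensity w := by
  ext s hs
  rw [Measure.map_apply hg hs, withDensity_apply _ (hg hs), withDensity_apply _ hs,
    setLIntegral_map hs hw hg]
  rfl

/-- A nonsingular isomorphism between the measure spaces `(α, μ)` and `(β, ν)`: maps `f` and `g`
that preserve null sets under preimages and are mutually inverse almost everywhere. For an edge
`e` of a branching system these are `f_e` and `f_e⁻¹`, between `μ.restrict (D (r e))` and
`μ.restrict (R e)`. -/
structure IsNonsingularIso (μ : Measure α) (ν : Measure β) (f : α → β) (g : β → α) : Prop where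
  quasiMeasurePreserving : Measure.QuasiMeasurePreserving f μ ν
  quasiMeasurePreserving_inv : Measure.QuasiMeasurePreserving g ν μ
  left_inv : ∀ᵐ t ∂μ, g (f t) = t
  right_inv : ∀ᵐ x ∂ν, f (g x) = x

/-- The weighted composition operator `φ ↦ (d(f_* μ)/dν)^{1/2} • (φ ∘ g)`. Along a nonsingular
isomorphism it carries `L²(μ)` isometrically onto `L²(ν)`. -/
noncomputable def weightedComp [NormedAddCommGroup E] [NormedSpace ℝ E] (μ : Measure α)
    (ν : Measure β) (f : α → β) (g : β → α) (φ : α → E) : β → E :=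
  fun x => √((μ.map f).rnDeriv ν x).toReal • φ (g x)

namespace IsNonsingularIso

variable {μ : Measure α} {ν : Measure β} {f : α → β} {g : β → α}

theorem symm (h : IsNonsingularIso μ ν f g) : IsNonsingularIso ν μ g f :=
  ⟨h.quasiMeasurePreserving_inv, h.quasiMeasurePreserving, h.right_inv, h.left_inv⟩

theorem measurable (h : IsNonsingularIso μ ν f g) : Measurable f :=
  h.quasiMeasurePreserving.measurable

theorem map_absolutelyContinuous (h : IsNonsingularIso μ ν f g) : μ.map f ≪ ν :=
  h.quasiMeasurePreserving.absolutelyContinuous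

theorem map_map (h : IsNonsingularIso μ ν f g) : (μ.map f).map g = μ := by
  rw [Measure.map_map h.symm.measurable h.measurable, Measure.map_congr (f := g ∘ f) (g := id)
    h.left_inv, Measure.map_id]

theorem sigmaFinite_map [SigmaFinite μ] (h : IsNonsingularIso μ ν f g) : SigmaFinite (μ.map f) :=
  SigmaFinite.of_map _ h.symm.measurable.aemeasurable (by rwa [h.map_map])

theorem rnDeriv_mul_rnDeriv_comp [SigmaFinite μ] [SigmaFinite ν] (h : IsNonsingularIso μ ν f g) :
    (ν.map g).rnDeriv μ * ((μ.map f).rnDeriv ν ∘ f) =ᵐ[μ] 1 := by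
  have := h.sigmaFinite_map
  have := h.symm.sigmaFinite_map
  set ρ := (μ.map f).rnDeriv ν
  set σ := (ν.map g).rnDeriv μ
  have hρ : Measurable ρ := Measure.measurable_rnDeriv _ _
  have hσ : Measurable σ := Measure.measurable_rnDeriv _ _
  have hρ_comp : Measurable (ρ ∘ f) := hρ.comp h.measurable
  have hρfg : (ρ ∘ f) ∘ g =ᵐ[ν] ρ := h.right_inv.mono fun x hx => congrArg ρ hx
  refine (withDensity_eq_iff_of_sigmaFinite (hσ.mul hρ_comp).aemeasurable aemeasurable_one).1 ?_
  calc μ.withDensity (σ * (ρ ∘ f))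
      = (ν.map g).withDensity (ρ ∘ f) := by
        rw [withDensity_mul _ hσ hρ_comp,
          Measure.withDensity_rnDeriv_eq _ _ h.symm.map_absolutelyContinuous]
    _ = (ν.withDensity ρ).map g := by
        rw [← map_withDensity_comp h.symm.measurable hρ_comp, withDensity_congr_ae hρfg]
    _ = μ.withDensity 1 := by
        rw [Measure.withDensity_rnDeriv_eq _ _ h.map_absolutelyContinuous, h.map_map,
          withDensity_one]

theorem sqrt_rnDeriv_mul_sqrt_rnDeriv_comp [SigmaFinite μ] [SigmaFinite ν]
    (h : IsNonsingularIso μ ν f g) :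
    ∀ᵐ t ∂μ, √((ν.map g).rnDeriv μ t).toReal * √((μ.map f).rnDeriv ν (f t)).toReal = 1 := by
  filter_upwards [h.rnDeriv_mul_rnDeriv_comp] with t ht
  rw [← Real.sqrt_mul ENNReal.toReal_nonneg, ← ENNReal.toReal_mul]
  simpa using congrArg (fun a : ℝ≥0∞ => √a.toReal) ht

section NormedSpace

variable [NormedAddCommGroup E] [NormedSpace ℝ E]

theorem integral_rnDeriv_smul [SigmaFinite μ] [SigmaFinite ν] (h : IsNonsingularIso μ ν f g)
    {u : β → E} (hu : AEStronglyMeasurable u ν) :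
    ∫ x, ((μ.map f).rnDeriv ν x).toReal • u x ∂ν = ∫ t, u (f t) ∂μ := by
  have := h.sigmaFinite_map
  rw [MeasureTheory.integral_rnDeriv_smul h.map_absolutelyContinuous,
    integral_map h.measurable.aemeasurable (hu.mono_ac h.map_absolutelyContinuous)]

theorem aestronglyMeasurable_weightedComp (h : IsNonsingularIso μ ν f g) {φ : α → E}
    (hφ : AEStronglyMeasurable φ μ) : AEStronglyMeasurable (weightedComp μ ν f g φ) ν :=
  (Measure.measurable_rnDeriv _ _).ennreal_toReal.sqrt.aestronglyMeasurable.smul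
    (hφ.comp_quasiMeasurePreserving h.quasiMeasurePreserving_inv)

theorem memLp_two_weightedComp [SigmaFinite μ] [SigmaFinite ν] (h : IsNonsingularIso μ ν f g)
    {φ : α → E} (hφ : MemLp φ 2 μ) : MemLp (weightedComp μ ν f g φ) 2 ν := by
  have := h.sigmaFinite_map
  rw [memLp_two_iff_integrable_sq_norm (h.aestronglyMeasurable_weightedComp hφ.1)]
  have hsq : (fun x => ‖weightedComp μ ν f g φ x‖ ^ 2) =
      fun x => ((μ.map f).rnDeriv ν x).toReal • ‖φ (g x)‖ ^ 2 := by
    ext x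
    rw [weightedComp, norm_smul, mul_pow, Real.norm_eq_abs, sq_abs,
      Real.sq_sqrt ENNReal.toReal_nonneg, smul_eq_mul]
  have hφg : AEStronglyMeasurable (fun x => ‖φ (g x)‖ ^ 2) ν :=
    (hφ.1.comp_quasiMeasurePreserving h.quasiMeasurePreserving_inv).norm.pow 2
  rw [hsq, integrable_rnDeriv_smul_iff h.map_absolutelyContinuous,
    integrable_map_measure (hφg.mono_ac h.map_absolutelyContinuous) h.measurable.aemeasurable]
  refine hφ.integrable_norm_pow two_ne_zero |>.congr ?_
  filter_upwards [h.left_inv] with t ht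
  rw [Function.comp_apply, ht]

theorem weightedComp_weightedComp [SigmaFinite μ] [SigmaFinite ν] (h : IsNonsingularIso μ ν f g)
    (φ : α → E) : weightedComp ν μ g f (weightedComp μ ν f g φ) =ᵐ[μ] φ := by
  filter_upwards [h.sqrt_rnDeriv_mul_sqrt_rnDeriv_comp, h.left_inv] with t hweight hinv
  rw [weightedComp, weightedComp, smul_smul, hweight, one_smul, hinv]

theorem weightedComp_congr (h : IsNonsingularIso μ ν f g) {φ φ' : α → E} (hφ : φ =ᵐ[μ] φ') :
    weightedComp μ ν f g φ =ᵐ[ν] weightedComp μ ν f g φ' := by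
  filter_upwards [h.quasiMeasurePreserving_inv.ae hφ] with x hx
  rw [weightedComp, weightedComp, hx]

end NormedSpace

variable {𝕜 : Type*} [RCLike 𝕜] [NormedAddCommGroup E] [InnerProductSpace 𝕜 E] [NormedSpace ℝ E]
  [IsScalarTower ℝ 𝕜 E]

theorem integral_inner_weightedComp [SigmaFinite μ] [SigmaFinite ν] (h : IsNonsingularIso μ ν f g)
    {φ : α → E} {ψ : β → E} (hφ : AEStronglyMeasurable φ μ) (hψ : AEStronglyMeasurable ψ ν) :
    ∫ x, inner 𝕜 (weightedComp μ ν f g φ x) (ψ x) ∂ν =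
      ∫ t, inner 𝕜 (φ t) (weightedComp ν μ g f ψ t) ∂μ := by
  set ρ := (μ.map f).rnDeriv ν with hρ
  set σ := (ν.map g).rnDeriv μ
  have hu : AEStronglyMeasurable (fun t => √(ρ (f t)).toReal • inner 𝕜 (φ t) (ψ (f t))) μ :=
    ((Measure.measurable_rnDeriv _ _).ennreal_toReal.sqrt.comp
      h.measurable).aestronglyMeasurable.smul
      (hφ.inner (hψ.comp_quasiMeasurePreserving h.quasiMeasurePreserving))
  calc ∫ x, inner 𝕜 (weightedComp μ ν f g φ x) (ψ x) ∂ν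
      = ∫ x, √(ρ (f (g x))).toReal • inner 𝕜 (φ (g x)) (ψ (f (g x))) ∂ν := by
        refine integral_congr_ae ?_
        filter_upwards [h.right_inv] with x hx
        rw [weightedComp, inner_smul_left_eq_smul, ← hρ, hx]
    _ = ∫ t, (σ t).toReal • √(ρ (f t)).toReal • inner 𝕜 (φ t) (ψ (f t)) ∂μ :=
        (h.symm.integral_rnDeriv_smul hu).symm
    _ = ∫ t, inner 𝕜 (φ t) (weightedComp ν μ g f ψ t) ∂μ := by
        refine integral_congr_ae ?_
        filter_upwards [h.sqrt_rnDeriv_mul_sqrt_rnDeriv_comp] with t hweight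
        have hscalar : (σ t).toReal * √(ρ (f t)).toReal = √(σ t).toReal := by
          rw [← mul_one √(σ t).toReal, ← hweight, ← mul_assoc,
            Real.mul_self_sqrt ENNReal.toReal_nonneg]
        rw [weightedComp, inner_smul_right_eq_smul, smul_smul, hscalar]

section Adjoint

variable [CompleteSpace E] [SigmaFinite μ] [SigmaFinite ν] {D : Set α} {R : Set β}
  {T : Lp E 2 μ →L[𝕜] Lp E 2 ν}

theorem adjoint_ae_eq (hD : MeasurableSet D) (hR : MeasurableSet R)
    (h : IsNonsingularIso (μ.restrict D) (ν.restrict R) f g)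
    (hT : ∀ φ, T φ =ᵐ[ν] R.indicator (weightedComp (μ.restrict D) (ν.restrict R) f g φ))
    (ψ : Lp E 2 ν) :
    T.adjoint ψ =ᵐ[μ] D.indicator (weightedComp (ν.restrict R) (μ.restrict D) g f ψ) := by
  have hmem : MemLp (D.indicator (weightedComp (ν.restrict R) (μ.restrict D) g f ψ)) 2 μ :=
    (memLp_indicator_iff_restrict hD).2 (h.symm.memLp_two_weightedComp ((Lp.memLp ψ).restrict R))
  suffices T.adjoint ψ = hmem.toLp _ from this ▸ hmem.coeFn_toLp
  refine ext_inner_left 𝕜 fun φ => ?_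
  rw [ContinuousLinearMap.adjoint_inner_right, L2.inner_def, L2.inner_def]
  calc ∫ x, inner 𝕜 (T φ x) (ψ x) ∂ν
      = ∫ x in R, inner 𝕜 (weightedComp (μ.restrict D) (ν.restrict R) f g φ x) (ψ x) ∂ν := by
        rw [← integral_indicator hR]
        refine integral_congr_ae ?_
        filter_upwards [hT φ] with x hx
        by_cases hxR : x ∈ R <;> simp [hx, hxR]
    _ = ∫ t in D, inner 𝕜 (φ t) (weightedComp (ν.restrict R) (μ.restrict D) g f ψ t) ∂μ :=
        h.integral_inner_weightedComp (Lp.aestronglyMeasurable φ).restrict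
          (Lp.aestronglyMeasurable ψ).restrict
    _ = ∫ t, inner 𝕜 (φ t) (hmem.toLp _ t) ∂μ := by
        rw [← integral_indicator hD]
        refine integral_congr_ae ?_
        filter_upwards [hmem.coeFn_toLp] with t ht
        by_cases htD : t ∈ D <;> simp [ht, htD]

theorem comp_adjoint_ae_eq (hD : MeasurableSet D) (hR : MeasurableSet R)
    (h : IsNonsingularIso (μ.restrict D) (ν.restrict R) f g)
    (hT : ∀ φ, T φ =ᵐ[ν] R.indicator (weightedComp (μ.restrict D) (ν.restrict R) f g φ))
    (ψ : Lp E 2 ν) : (T ∘L T.adjoint) ψ =ᵐ[ν] R.indicator ψ := by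
  have hadj : T.adjoint ψ =ᵐ[μ.restrict D]
      weightedComp (ν.restrict R) (μ.restrict D) g f ψ :=
    Filter.EventuallyEq.trans (ae_restrict_of_ae (h.adjoint_ae_eq hD hR hT ψ)) <|
      indicator_ae_eq_restrict hD
  exact (hT (T.adjoint ψ)).trans <| (ae_eq_restrict_iff_indicator_ae_eq hR).1 <|
    (h.weightedComp_congr hadj).trans (h.symm.weightedComp_weightedComp ψ)

theorem comp_adjoint_comp_self (hD : MeasurableSet D) (hR : MeasurableSet R)
    (h : IsNonsingularIso (μ.restrict D) (ν.restrict R) f g)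
    (hT : ∀ φ, T φ =ᵐ[ν] R.indicator (weightedComp (μ.restrict D) (ν.restrict R) f g φ)) :
    T ∘L T.adjoint ∘L T = T := by
  refine ContinuousLinearMap.ext fun φ => Lp.ext ?_
  filter_upwards [h.comp_adjoint_ae_eq hD hR hT (T φ), hT φ] with x hTT hTφ
  refine hTT.trans ?_
  by_cases hx : x ∈ R <;> simp [hTφ, hx]

end Adjoint

end IsNonsingularIso

theorem RelBranchingSystem.isNonsingularIso [MeasurableSpace X] {μ : Measure X} {r s : E1 → V0}
    {V : Set V0} {R : E1 → Set X} {D : V0 → Set X} {f finv : E1 → X → X}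
    (h : RelBranchingSystem r s V μ R D f finv) (e : E1) :
    IsNonsingularIso (μ.restrict (D (r e))) (μ.restrict (R e)) (f e) (finv e) where
  quasiMeasurePreserving := by
    simpa [Measure.restrict_restrict (h.measD (r e))] using
      (Measure.QuasiMeasurePreserving.mk (h.measf e) (h.ac_f e)).restrict (h.mapsf e)
  quasiMeasurePreserving_inv := by
    simpa [Measure.restrict_restrict (h.measR e)] using
      (Measure.QuasiMeasurePreserving.mk (h.measfinv e) (h.ac_finv e)).restrict (h.mapsfinv e)
  left_inv := h.inv_left e
  right_inv := h.inv_right e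

theorem Taction_ae_eq [MeasurableSpace X] {μ : Measure X} [SigmaFinite μ] {D R : Set X}
    {f : X → X} [SigmaFinite ((μ.restrict D).map f)] (hR : MeasurableSet R) (g : X → X)
    (φ : X → ℂ) :
    Taction μ R D f g φ =ᵐ[μ] R.indicator (weightedComp (μ.restrict D) (μ.restrict R) f g φ) := by
  refine (ae_eq_restrict_iff_indicator_ae_eq hR).1 ?_
  filter_upwards [rnDeriv_restrict_right ((μ.restrict D).map f) μ hR] with x hx
  rw [weightedComp, hx, Complex.real_smul, pushDeriv]

theorem statement1_general [MeasurableSpace X] {μ : Measure X} [SigmaFinite μ]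
    (r s : E1 → V0) (V : Set V0)
    (R : E1 → Set X) (D : V0 → Set X) (f finv : E1 → X → X)
    (hbs : RelBranchingSystem r s V μ R D f finv) (e : E1)
    (T : Lp ℂ 2 μ →L[ℂ] Lp ℂ 2 μ)
    (hT : ∀ φ : Lp ℂ 2 μ, ⇑(T φ) =ᵐ[μ] Taction μ (R e) (D (r e)) (f e) (finv e) ⇑φ) :
    (∀ ψ : Lp ℂ 2 μ, ⇑((ContinuousLinearMap.adjoint T) ψ) =ᵐ[μ]
      (D (r e)).indicator fun t =>
        (Real.sqrt ((pushDeriv μ (R e) (finv e) t).toReal) : ℂ) * (ψ : X → ℂ) (f e t)) ∧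
    (∀ φ : Lp ℂ 2 μ, ⇑((T ∘L ContinuousLinearMap.adjoint T) φ) =ᵐ[μ]
      (R e).indicator fun x => (φ : X → ℂ) x) ∧
    (T ∘L ContinuousLinearMap.adjoint T ∘L T = T) ∧
    (∀ φ : Lp ℂ 2 μ, ⇑((T ∘L ContinuousLinearMap.adjoint T) φ) =ᵐ[μ]
      (D (s e)).indicator fun x => ((T ∘L ContinuousLinearMap.adjoint T) φ : X → ℂ) x) := by
  have hiso := hbs.isNonsingularIso e
  have := hiso.sigmaFinite_map
  have := hiso.symm.sigmaFinite_map
  have hD := hbs.measD (r e)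
  have hR := hbs.measR e
  have hT' : ∀ φ, T φ =ᵐ[μ] (R e).indicator
      (weightedComp (μ.restrict (D (r e))) (μ.restrict (R e)) (f e) (finv e) φ) :=
    fun φ => (hT φ).trans (Taction_ae_eq hR (finv e) φ)
  have hTT := hiso.comp_adjoint_ae_eq hD hR hT'
  refine ⟨fun ψ => (hiso.adjoint_ae_eq hD hR hT' ψ).trans (Taction_ae_eq hD (f e) ψ).symm,
    hTT, hiso.comp_adjoint_comp_self hD hR hT', fun φ => ?_⟩
  filter_upwards [hTT φ, ae_le_set.2 (hbs.RsubD e)] with x hx hsub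
  refine (indicator_apply_eq_self.2 fun hxD => ?_).symm
  rw [hx, indicator_of_notMem fun hxR => hxD (hsub hxR)]

/-- For every edge `e`, the adjoint of the operator `T_e` (the bounded
operator with `T_e φ = Φ_{f_e⁻¹}^{1/2}·(φ ∘ f_e⁻¹)` on `R e` and `0` elsewhere) acts by
`T_e* ψ =ᵐ χ_{D (r e)} · Φ_{f_e}^{1/2} · (ψ ∘ f_e)`.  Moreover `T_e T_e*` is multiplication
by the indicator of `R e`; consequently `T_e T_e* T_e = T_e` (so `T_e` is a partial
isometry) and `M_{χ_{D (s e)}} ∘ (T_e T_e*) = T_e T_e*`, i.e. `T_e T_e* ≤ M_{χ_{D (s e)}}`. -/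
theorem statement1 [MeasurableSpace X] {μ : Measure X} [SigmaFinite μ]
    (r s : E1 → V0) [Fintype V0] [Fintype E1] (V : Set V0)
    (R : E1 → Set X) (D : V0 → Set X) (f finv : E1 → X → X)
    (hbs : RelBranchingSystem r s V μ R D f finv) (e : E1)
    (T : Lp ℂ 2 μ →L[ℂ] Lp ℂ 2 μ)
    (hT : ∀ φ : Lp ℂ 2 μ, ⇑(T φ) =ᵐ[μ] Taction μ (R e) (D (r e)) (f e) (finv e) ⇑φ) :
    (∀ ψ : Lp ℂ 2 μ, ⇑((ContinuousLinearMap.adjoint T) ψ) =ᵐ[μ]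
      (D (r e)).indicator fun t =>
        (Real.sqrt ((pushDeriv μ (R e) (finv e) t).toReal) : ℂ) * (ψ : X → ℂ) (f e t)) ∧
    (∀ φ : Lp ℂ 2 μ, ⇑((T ∘L ContinuousLinearMap.adjoint T) φ) =ᵐ[μ]
      (R e).indicator fun x => (φ : X → ℂ) x) ∧
    (T ∘L ContinuousLinearMap.adjoint T ∘L T = T) ∧
    (∀ φ : Lp ℂ 2 μ, ⇑((T ∘L ContinuousLinearMap.adjoint T) φ) =ᵐ[μ]
      (D (s e)).indicator fun x => ((T ∘L ContinuousLinearMap.adjoint T) φ : X → ℂ) x) :=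
  statement1_general r s V R D f finv hbs e T hT

end
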